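/- For every n : ℕ, the number of black-white trees with n nodes equals the number of zigzag-free binary trees with n nodes. (Equivalently, the maps BwToBz and BzToBw of the paper are mutually inverse size-preserving bijections between black-white trees and zigzag-free trees.) -/

import Mathlib

mutual
  /-- Black-white trees with a black root: a black node has no right child and
  its left subtree is either a black-rooted tree or a (possibly empty) white-rooted tree. -/
  inductive BWBlack : Type
    | blackLeft : BWBlack → BWBlack
    | whiteLeft : BWWhite → BWBlack

  /-- (Possibly empty) white-rooted black-white trees: a white node has a possibly empty
  white-rooted left subtree and an optional black-rooted right subtree. -/
  inductive BWWhite : Type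
    | empty : BWWhite
    | whiteLeft : BWWhite → BWWhite
    | whiteLeftBlackRight : BWWhite → BWBlack → BWWhite
end

mutual
  /-- Number of nodes of a black-rooted black-white tree. -/
  def BWBlack.size : BWBlack → ℕ
    | .blackLeft t => t.size + 1
    | .whiteLeft t => t.size + 1

  /-- Number of nodes of a (possibly empty) white-rooted black-white tree. -/
  def BWWhite.size : BWWhite → ℕ
    | .empty => 0
    | .whiteLeft t => t.size + 1
    | .whiteLeftBlackRight t t' => t.size + t'.size + 1
end

/-- Binary trees, where each node has an optional left child and an optional right child
(`nil` denotes the absence of a child; the empty tree is `nil`). -/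
inductive BTree : Type
  | nil : BTree
  | node : BTree → BTree → BTree

/-- Number of nodes of a binary tree. -/
def BTree.size : BTree → ℕ
  | .nil => 0
  | .node l r => l.size + r.size + 1

/-- A binary tree is zigzag-free if it contains no node whose left child
has a right child but no left child. -/
def BTree.zigzagFree : BTree → Prop
  | .nil => True
  | .node l r =>
      (∀ a b : BTree, l ≠ .node .nil (.node a b)) ∧ l.zigzagFree ∧ r.zigzagFree

mutual
  /-- The bijection from black-white trees to zigzag-free trees. -/
  def bwToBz : BWBlack → BTree
    | .blackLeft t => .node .nil (bwToBz t)
    | .whiteLeft w => whiteToBz w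

  /-- White-rooted trees go to trees which may occur as left children. -/
  def whiteToBz : BWWhite → BTree
    | .empty => .node .nil .nil
    | .whiteLeft w => .node (whiteToBz w) .nil
    | .whiteLeftBlackRight w b => .node (whiteToBz w) (bwToBz b)
end

theorem whiteToBz_ne_nil (w : BWWhite) : whiteToBz w ≠ .nil := by
  cases w <;> simp [whiteToBz]

theorem bwToBz_ne_nil (b : BWBlack) : bwToBz b ≠ .nil := by
  cases b with
  | blackLeft t => simp [bwToBz]
  | whiteLeft w => simpa [bwToBz] using whiteToBz_ne_nil w

theorem whiteToBz_ne_zig (w : BWWhite) (r : BTree) (hr : r ≠ .nil) :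
    whiteToBz w ≠ .node .nil r := by
  cases w with
  | empty => simpa [whiteToBz] using hr.symm
  | whiteLeft w => simp [whiteToBz, whiteToBz_ne_nil]
  | whiteLeftBlackRight w b => simp [whiteToBz, whiteToBz_ne_nil]

mutual
  theorem bwToBz_size : ∀ b : BWBlack, (bwToBz b).size = b.size
    | .blackLeft t => by simp [bwToBz, BTree.size, BWBlack.size, bwToBz_size t]
    | .whiteLeft w => by simp [bwToBz, BWBlack.size, whiteToBz_size w]

  theorem whiteToBz_size : ∀ w : BWWhite, (whiteToBz w).size = w.size + 1
    | .empty => by simp [whiteToBz, BTree.size, BWWhite.size]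
    | .whiteLeft w => by simp [whiteToBz, BTree.size, BWWhite.size, whiteToBz_size w]
    | .whiteLeftBlackRight w b => by
        simp only [whiteToBz, BTree.size, BWWhite.size, whiteToBz_size w, bwToBz_size b]
        omega
end

mutual
  theorem bwToBz_zigzagFree : ∀ b : BWBlack, (bwToBz b).zigzagFree
    | .blackLeft t => by simp [bwToBz, BTree.zigzagFree, bwToBz_zigzagFree t]
    | .whiteLeft w => by simpa [bwToBz] using whiteToBz_zigzagFree w

  theorem whiteToBz_zigzagFree : ∀ w : BWWhite, (whiteToBz w).zigzagFree
    | .empty => by simp [whiteToBz, BTree.zigzagFree]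
    | .whiteLeft w => by
        simp only [whiteToBz, BTree.zigzagFree]
        exact ⟨fun a b => whiteToBz_ne_zig w _ (by simp), whiteToBz_zigzagFree w, trivial⟩
    | .whiteLeftBlackRight w b => by
        simp only [whiteToBz, BTree.zigzagFree]
        exact ⟨fun a b => whiteToBz_ne_zig w _ (by simp), whiteToBz_zigzagFree w,
          bwToBz_zigzagFree b⟩
end

mutual
  theorem bwToBz_inj : ∀ b b' : BWBlack, bwToBz b = bwToBz b' → b = b'
    | .blackLeft t, .blackLeft t', h => by
        simp only [bwToBz, BTree.node.injEq, true_and] at h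
        rw [bwToBz_inj t t' h]
    | .blackLeft t, .whiteLeft w, h => by
        simp only [bwToBz] at h
        exact absurd h.symm (whiteToBz_ne_zig w _ (bwToBz_ne_nil t))
    | .whiteLeft w, .blackLeft t, h => by
        simp only [bwToBz] at h
        exact absurd h (whiteToBz_ne_zig w _ (bwToBz_ne_nil t))
    | .whiteLeft w, .whiteLeft w', h => by
        simp only [bwToBz] at h
        rw [whiteToBz_inj w w' h]

  theorem whiteToBz_inj : ∀ w w' : BWWhite, whiteToBz w = whiteToBz w' → w = w'
    | .empty, .empty, _ => rfl
    | .empty, .whiteLeft w, h => by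
        simp [whiteToBz, (whiteToBz_ne_nil w).symm] at h
    | .empty, .whiteLeftBlackRight w b, h => by
        simp [whiteToBz, (whiteToBz_ne_nil w).symm] at h
    | .whiteLeft w, .empty, h => by
        simp [whiteToBz, whiteToBz_ne_nil w] at h
    | .whiteLeft w, .whiteLeft w', h => by
        simp only [whiteToBz, BTree.node.injEq, and_true] at h
        rw [whiteToBz_inj w w' h]
    | .whiteLeft w, .whiteLeftBlackRight w' b, h => by
        simp [whiteToBz, (bwToBz_ne_nil b).symm] at h
    | .whiteLeftBlackRight w b, .empty, h => by
        simp [whiteToBz, whiteToBz_ne_nil w] at h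
    | .whiteLeftBlackRight w b, .whiteLeft w', h => by
        simp [whiteToBz, bwToBz_ne_nil b] at h
    | .whiteLeftBlackRight w b, .whiteLeftBlackRight w' b', h => by
        simp only [whiteToBz, BTree.node.injEq] at h
        rw [whiteToBz_inj w w' h.1, bwToBz_inj b b' h.2]
end

theorem bz_surj (t : BTree) : t ≠ .nil → t.zigzagFree →
    (∃ b, bwToBz b = t) ∧
      ((∀ a b : BTree, t ≠ .node .nil (.node a b)) → ∃ w, whiteToBz w = t) := by
  induction t with
  | nil => intro h; exact absurd rfl h
  | node l r ihl ihr =>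
    rintro - ⟨h, hl, hr⟩
    suffices H : (∃ w, whiteToBz w = .node l r) ∨
        ((∃ b, bwToBz b = .node l r) ∧ ∃ a b : BTree, BTree.node l r = .node .nil (.node a b)) by
      rcases H with ⟨w, hw⟩ | ⟨hb, a, b, hab⟩
      · exact ⟨⟨.whiteLeft w, by simpa [bwToBz] using hw⟩, fun _ => ⟨w, hw⟩⟩
      · exact ⟨hb, fun hn => absurd hab (hn a b)⟩
    by_cases hln : l = .nil
    · subst hln
      cases r with
      | nil => exact Or.inl ⟨.empty, by simp [whiteToBz]⟩
      | node a b =>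
        obtain ⟨⟨c, hc⟩, -⟩ := ihr (by simp) hr
        exact Or.inr ⟨⟨.blackLeft c, by simp [bwToBz, hc]⟩, a, b, rfl⟩
    · obtain ⟨w, hw⟩ := (ihl hln hl).2 h
      by_cases hrn : r = .nil
      · exact Or.inl ⟨.whiteLeft w, by simp [whiteToBz, hw, hrn]⟩
      · obtain ⟨⟨c, hc⟩, -⟩ := ihr hrn hr
        exact Or.inl ⟨.whiteLeftBlackRight w c, by simp [whiteToBz, hw, hc]⟩

theorem blackWhite_equinumerous_zigzagFree :
    ∀ n : ℕ,
      Nat.card {b : BWBlack // b.size = n}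
        = Nat.card {t : BTree // t ≠ .nil ∧ t.zigzagFree ∧ t.size = n} := by
  intro n
  refine Nat.card_eq_of_bijective
    (fun b => ⟨bwToBz b.1, bwToBz_ne_nil _, bwToBz_zigzagFree _, (bwToBz_size _).trans b.2⟩)
    ⟨?_, ?_⟩
  · intro b b' h
    exact Subtype.ext (bwToBz_inj _ _ (congrArg Subtype.val h))
  · rintro ⟨t, h1, h2, h3⟩
    obtain ⟨b, hb⟩ := (bz_surj t h1 h2).1
    exact ⟨⟨b, by rw [← bwToBz_size, hb, h3]⟩, Subtype.ext hb⟩
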